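/- Let (A, ×, 1) be a cartesian monoidal category. Any idempotent monad on A whose functor part preserves the terminal object 1 is right pre-Hopf as an opmonoidal monad (with respect to its canonical opmonoidal structure). -/

import Mathlib

open CategoryTheory CategoryTheory.Limits

section

variable {A : Type*} [Category A]

theorem isIso_prod_fst_of_isTerminal (X : A) {Y : A} [HasBinaryProduct X Y] (hY : IsTerminal Y) :
    IsIso (prod.fst : X ⨯ Y ⟶ X) :=
  (BinaryFan.isLimit_iff_isIso_fst hY _).1 ⟨limit.isLimit (pair X Y)⟩

variable [HasBinaryProducts A] (T : CategoryTheory.Monad A)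

/-- The right fusion operator `H^r_{a,b} = (m_a × T(b)) ∘ χ_{T(a),b}` of a monad `T` for its
canonical opmonoidal structure, whose component `χ` is `prodComparison`. -/
noncomputable def rightFusion (a b : A) : T.obj (T.obj a ⨯ b) ⟶ T.obj a ⨯ T.obj b :=
  prodComparison T.toFunctor (T.obj a) b ≫ prod.map (T.μ.app a) (𝟙 (T.obj b))

theorem rightFusion_fst (a b : A) :
    rightFusion T a b ≫ prod.fst = T.map prod.fst ≫ T.μ.app a := by
  rw [rightFusion, Category.assoc, prod.map_fst, prodComparison_fst_assoc]

theorem isIso_rightFusion_iff_isIso_μ_app (a : A) {b : A} (hb : IsTerminal b)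
    (hTb : IsTerminal (T.obj b)) : IsIso (rightFusion T a b) ↔ IsIso (T.μ.app a) := by
  have : IsIso (prod.fst : T.obj a ⨯ b ⟶ T.obj a) := isIso_prod_fst_of_isTerminal _ hb
  have : IsIso (prod.fst : T.obj a ⨯ T.obj b ⟶ T.obj a) := isIso_prod_fst_of_isTerminal _ hTb
  rw [← isIso_comp_right_iff (rightFusion T a b) prod.fst, rightFusion_fst, isIso_comp_left_iff]

end

/-- STATEMENT 19: any idempotent monad on a cartesian monoidal category whose functor
part preserves the terminal object is right pre-Hopf with respect to its canonical
opmonoidal structure, i.e. the right fusion operator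
`H^r_{a,1} = (m_a × T(1)) ∘ ⟨T(p₁), T(p₂)⟩ : T(T(a) × 1) ⟶ T(a) × T(1)` is an
isomorphism for every object `a`. -/
theorem stmt_19 {A : Type*} [Category A] [HasFiniteProducts A]
    (T : CategoryTheory.Monad A)
    (hidem : IsIso T.μ)
    (hpres : IsIso (terminal.from (T.obj (⊤_ A)))) :
    ∀ a : A,
      IsIso (prod.lift (T.map (prod.fst : T.obj a ⨯ (⊤_ A) ⟶ T.obj a))
          (T.map (prod.snd : T.obj a ⨯ (⊤_ A) ⟶ ⊤_ A)) ≫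
        prod.map (T.μ.app a) (𝟙 (T.obj (⊤_ A)))) := by
  intro a
  have isTerminal_obj_terminal : IsTerminal (T.obj (⊤_ A)) :=
    terminalIsTerminal.ofIso (asIso (terminal.from (T.obj (⊤_ A)))).symm
  have isIso_μ_app : IsIso (T.μ.app a) := inferInstance
  exact (isIso_rightFusion_iff_isIso_μ_app T a terminalIsTerminal isTerminal_obj_terminal).2
    isIso_μ_app
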